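/- Let χ : ℝ^d → [0,∞) be a smooth probability density supported in the closed unit ball, and for r > 0 set χ_r(x) := r^{−d} χ(x/r). There exists a constant C, depending only on d and χ, such that for every Borel probability measure ν on 𝕋^d, every probability density h ∈ L^∞(𝕋^d), every r > 0, every p ∈ [1,∞] and every q ∈ [1,∞): ‖χ_r ∗ ν‖_{L^p(𝕋^d)} ≤ C ( ‖h‖_{L^p(𝕋^d)} + r^{−(q+d)} W_q^q(h dx, ν) ), where (χ_r ∗ ν)(x) := ∫_{𝕋^d} χ_r(x − y) dν(y) (with χ_r regarded as a ℤ^d-periodic function on 𝕋^d by periodisation). -/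

import Mathlib

open MeasureTheory Real Set
open scoped ENNReal

noncomputable section

/-- The fundamental domain `[0,1)^d` of the flat torus `𝕋^d = ℝ^d/ℤ^d`. -/
def Tcube (d : ℕ) : Set (Fin d → ℝ) := Set.univ.pi fun _ => Set.Ico (0:ℝ) 1

/-- The Haar (Lebesgue) probability measure on the torus `𝕋^d`, realised as Lebesgue
measure restricted to the fundamental domain `[0,1)^d`. -/
def torusMeasure (d : ℕ) : Measure (Fin d → ℝ) := volume.restrict (Tcube d)

/-- The Euclidean norm on `ℝ^d`. -/
def euclNorm {d : ℕ} (v : Fin d → ℝ) : ℝ := Real.sqrt (∑ i, (v i) ^ 2)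

/-- The lattice vector in `ℝ^d` associated to `k ∈ ℤ^d`. -/
def latVec {d : ℕ} (k : Fin d → ℤ) : Fin d → ℝ := fun i => (k i : ℝ)

/-- `ℤ^d`-periodicity of a function on `ℝ^d`; such functions are exactly the functions
on the torus `𝕋^d`. -/
def ZPeriodic {d : ℕ} {α : Type*} (f : (Fin d → ℝ) → α) : Prop :=
  ∀ (x : Fin d → ℝ) (k : Fin d → ℤ), f (x + latVec k) = f x

/-- The quotient (flat) metric on the torus `𝕋^d`, expressed on representatives in `ℝ^d`. -/
def tdist {d : ℕ} (x y : Fin d → ℝ) : ℝ := ⨅ k : Fin d → ℤ, euclNorm (x - y + latVec k)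

/-- The gradient of a scalar function on `ℝ^d`, as an `ℝ^d`-valued function. -/
def grad {d : ℕ} (U : (Fin d → ℝ) → ℝ) (x : Fin d → ℝ) : Fin d → ℝ :=
  fun i => fderiv ℝ U x (Pi.single i 1)

/-- The Laplacian: the sum of the second partial derivatives. -/
def lap {d : ℕ} (U : (Fin d → ℝ) → ℝ) (x : Fin d → ℝ) : ℝ :=
  ∑ i, fderiv ℝ (fun y => fderiv ℝ U y (Pi.single i 1)) x (Pi.single i 1)

/-- The Hessian matrix of second partial derivatives. -/
def hess {d : ℕ} (U : (Fin d → ℝ) → ℝ) (x : Fin d → ℝ) : Fin d → Fin d → ℝ :=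
  fun i j => fderiv ℝ (fun y => fderiv ℝ U y (Pi.single j 1)) x (Pi.single i 1)

/-- Frobenius (Euclidean) norm of a `d × d` matrix. -/
def frobNorm {d : ℕ} (M : Fin d → Fin d → ℝ) : ℝ := Real.sqrt (∑ i, ∑ j, (M i j) ^ 2)

/-- Euclidean dot product on `ℝ^d`. -/
def dotP {d : ℕ} (v w : Fin d → ℝ) : ℝ := ∑ i, v i * w i

/-- `HolderBnd α u K` expresses that the Hölder norm `‖u‖_{C^{0,α}(𝕋^d)}`, i.e. the sup
norm plus the `α`-Hölder seminorm with respect to the torus metric, is at most `K`. -/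
def HolderBnd {d : ℕ} (α : ℝ) (u : (Fin d → ℝ) → ℝ) (K : ℝ) : Prop :=
  ∃ A B : ℝ, 0 ≤ A ∧ 0 ≤ B ∧ A + B ≤ K ∧ (∀ x, |u x| ≤ A) ∧
    ∀ x y, |u x - u y| ≤ B * tdist x y ^ α

/-- Hölder norm bound for an `ℝ^d`-valued function, with the Euclidean norm on values. -/
def HolderBndVec {d : ℕ} (α : ℝ) (G : (Fin d → ℝ) → Fin d → ℝ) (K : ℝ) : Prop :=
  ∃ A B : ℝ, 0 ≤ A ∧ 0 ≤ B ∧ A + B ≤ K ∧ (∀ x, euclNorm (G x) ≤ A) ∧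
    ∀ x y, euclNorm (G x - G y) ≤ B * tdist x y ^ α

/-- Hölder norm bound for a matrix-valued function. -/
def HolderBndMat {d : ℕ} (α : ℝ) (M : (Fin d → ℝ) → Fin d → Fin d → ℝ) (K : ℝ) : Prop :=
  ∃ A B : ℝ, 0 ≤ A ∧ 0 ≤ B ∧ A + B ≤ K ∧ (∀ x, frobNorm (M x) ≤ A) ∧
    ∀ x y, frobNorm (M x - M y) ≤ B * tdist x y ^ α

/-- `C1Bnd α u K` expresses `‖u‖_{C^{1,α}(𝕋^d)} ≤ K` (the `C^{0,α}` norm of `u` plus the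
`C^{0,α}` norm of its gradient is at most `K`). -/
def C1Bnd {d : ℕ} (α : ℝ) (u : (Fin d → ℝ) → ℝ) (K : ℝ) : Prop :=
  ∃ K₀ K₁ : ℝ, 0 ≤ K₀ ∧ 0 ≤ K₁ ∧ K₀ + K₁ ≤ K ∧
    HolderBnd α u K₀ ∧ HolderBndVec α (grad u) K₁

/-- `C2Bnd α u K` expresses that the second derivatives of `u` are `α`-Hölder continuous
and `‖u‖_{C^{2,α}(𝕋^d)} ≤ K`. -/
def C2Bnd {d : ℕ} (α : ℝ) (u : (Fin d → ℝ) → ℝ) (K : ℝ) : Prop :=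
  ∃ K₀ K₁ K₂ : ℝ, 0 ≤ K₀ ∧ 0 ≤ K₁ ∧ 0 ≤ K₂ ∧ K₀ + K₁ + K₂ ≤ K ∧
    HolderBnd α u K₀ ∧ HolderBndVec α (grad u) K₁ ∧ HolderBndMat α (hess u) K₂

/-- A coupling of two measures: a measure on the product whose marginals are `μ` and `ν`. -/
def IsCoupling {X : Type*} [MeasurableSpace X] (cpl : Measure (X × X)) (μ ν : Measure X) : Prop :=
  cpl.map Prod.fst = μ ∧ cpl.map Prod.snd = ν

/-- `W_q^q`: the `q`-th power of the Wasserstein distance of order `q` on the torus,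
defined as the infimum over couplings of the integral of the `q`-th power of the torus
distance. -/
def WassPow {d : ℕ} (q : ℝ) (μ ν : Measure (Fin d → ℝ)) : ℝ :=
  sInf { c | ∃ cpl : Measure ((Fin d → ℝ) × (Fin d → ℝ)), IsProbabilityMeasure cpl ∧
    IsCoupling cpl μ ν ∧ c = ∫ z, tdist z.1 z.2 ^ q ∂cpl }

/-- The Wasserstein distance of order `p` on the torus. -/
def Wass {d : ℕ} (p : ℝ) (μ ν : Measure (Fin d → ℝ)) : ℝ :=
  sInf { c | ∃ cpl : Measure ((Fin d → ℝ) × (Fin d → ℝ)), IsProbabilityMeasure cpl ∧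
    IsCoupling cpl μ ν ∧ c = (∫ z, tdist z.1 z.2 ^ p ∂cpl) ^ (1/p) }

/-- The measure `h dx` on the torus associated to a density `h`. -/
def densMeasure {d : ℕ} (h : (Fin d → ℝ) → ℝ) : Measure (Fin d → ℝ) :=
  (torusMeasure d).withDensity fun x => ENNReal.ofReal (h x)

/-- The `L^p(𝕋^d)` norm (as a real number). -/
def LpNorm {d : ℕ} (p : ℝ≥0∞) (u : (Fin d → ℝ) → ℝ) : ℝ :=
  (eLpNorm u p (torusMeasure d)).toReal

/-- `U` is a weak solution of `ε² Δ U = g` on the torus: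
`ε² ∫ ∇U·∇φ dx = −∫ g φ dx` for every smooth (periodic) test function `φ`. -/
def IsWeakPoisson {d : ℕ} (ε : ℝ) (U g : (Fin d → ℝ) → ℝ) : Prop :=
  ∀ φ : (Fin d → ℝ) → ℝ, ContDiff ℝ (⊤ : ℕ∞) φ → ZPeriodic φ →
    ε ^ 2 * ∫ x, dotP (grad U x) (grad φ x) ∂(torusMeasure d) =
      - ∫ x, g x * φ x ∂(torusMeasure d)

end
noncomputable section

/-- The rescaled mollifier `χ_r(x) = r^{-d} χ(x/r)` on `ℝ^d`. -/
def scaledMollifier {d : ℕ} (χ : (Fin d → ℝ) → ℝ) (r : ℝ) (x : Fin d → ℝ) : ℝ :=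
  (r ^ d)⁻¹ * χ (fun i => x i / r)

/-- The `ℤ^d`-periodisation of a function on `ℝ^d`, giving a function on the torus. -/
def periodised {d : ℕ} (g : (Fin d → ℝ) → ℝ) (x : Fin d → ℝ) : ℝ :=
  ∑' k : Fin d → ℤ, g (x + latVec k)

/-- The measure `χ_r ∗ μ` on the torus: the measure with density
`x ↦ ∫ χ_r(x − y) dμ(y)` with respect to the Haar measure (with `χ_r` periodised). -/
def mollifyMeasure {d : ℕ} (χ : (Fin d → ℝ) → ℝ) (r : ℝ) (μ : Measure (Fin d → ℝ)) :
    Measure (Fin d → ℝ) :=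
  (torusMeasure d).withDensity fun x =>
    ENNReal.ofReal (∫ y, periodised (scaledMollifier χ r) (x - y) ∂μ)

/-- A Borel probability measure on the torus `𝕋^d`, realised as a probability measure on
`ℝ^d` carried by the fundamental domain. -/
def IsTorusProb {d : ℕ} (μ : Measure (Fin d → ℝ)) : Prop :=
  IsProbabilityMeasure μ ∧ μ (Tcube d)ᶜ = 0

/-- The set `A_d` of allowed Hölder exponents: `(0,1)` if `d = 2`, `(0,1/5]` if `d = 3`. -/
def Aset (d : ℕ) : Set ℝ := if d = 2 then Set.Ioo 0 1 else Set.Ioc 0 (1/5)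

end

/-! Couple `ν` to `h dx` by a plan `π`. Where `π` moves mass by less than `r`, the kernel `χ_r`,
which is at most a multiple of `r ^ (-d)` when `r ≤ 1`, sees at most the `h dx`-mass of the
`2 r`-neighbourhood of `x`. As a function of `x` this mass is the image of `h` under an integral
operator with row and column sums `O(r ^ d)`, so Schur's test bounds its `L^p` norm by a multiple
of `r ^ d ‖h‖_p`. Markov's inequality bounds the remaining mass by `r ^ (-q) ∫ d(x, y) ^ q dπ`, and
its contribution to `χ_r ∗ ν` is at most `r ^ (-d)` times as large. One then takes the infimum over
`π`. If `r ≥ 1`, then `χ_r ∗ ν` is bounded, and `1 = ‖h‖_1 ≤ ‖h‖_p`. -/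

section IntegralEstimates

variable {X Y : Type*} [MeasurableSpace X] [MeasurableSpace Y] {μ : Measure X} {ν : Measure Y}

theorem enorm_integral_le_eLpNorm {E : Type*} [NormedAddCommGroup E] [NormedSpace ℝ E]
    [IsProbabilityMeasure μ] {f : X → E} (hf : AEStronglyMeasurable f μ) {p : ℝ≥0∞} (hp : 1 ≤ p) :
    ‖∫ x, f x ∂μ‖ₑ ≤ eLpNorm f p μ :=
  calc ‖∫ x, f x ∂μ‖ₑ ≤ ∫⁻ x, ‖f x‖ₑ ∂μ := enorm_integral_le_lintegral_enorm _
    _ = eLpNorm f 1 μ := eLpNorm_one_eq_lintegral_enorm.symm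
    _ ≤ eLpNorm f p μ := eLpNorm_le_eLpNorm_of_exponent_le hp hf

theorem lintegral_mul_rpow_le_rpow_mul_lintegral_mul_rpow {k f : Y → ℝ≥0∞}
    (hk : AEMeasurable k ν) (hf : AEMeasurable f ν) {p : ℝ} (hp : 1 ≤ p) :
    (∫⁻ y, k y * f y ∂ν) ^ p ≤ (∫⁻ y, k y ∂ν) ^ (p - 1) * ∫⁻ y, k y * f y ^ p ∂ν := by
  have hp0 : 0 < p := zero_lt_one.trans_le hp
  have hpinv : p⁻¹ ≤ 1 := inv_le_one_of_one_le₀ hp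
  have split (y : Y) : k y * f y = (k y * f y ^ p) ^ p⁻¹ * k y ^ (1 - p⁻¹) := by
    rw [ENNReal.mul_rpow_of_nonneg _ _ (inv_nonneg.2 hp0.le), ENNReal.rpow_rpow_inv hp0.ne',
      mul_right_comm, ← ENNReal.rpow_add_of_nonneg _ _ (inv_nonneg.2 hp0.le) (sub_nonneg.2 hpinv),
      add_sub_cancel, ENNReal.rpow_one]
  have holder : ∫⁻ y, k y * f y ∂ν ≤
      (∫⁻ y, k y * f y ^ p ∂ν) ^ p⁻¹ * (∫⁻ y, k y ∂ν) ^ (1 - p⁻¹) := by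
    simp_rw [split]
    exact ENNReal.lintegral_mul_norm_pow_le (hk.mul (hf.pow_const p)) hk (inv_nonneg.2 hp0.le)
      (sub_nonneg.2 hpinv) (add_sub_cancel _ _)
  calc (∫⁻ y, k y * f y ∂ν) ^ p
      ≤ ((∫⁻ y, k y * f y ^ p ∂ν) ^ p⁻¹ * (∫⁻ y, k y ∂ν) ^ (1 - p⁻¹)) ^ p := by gcongr
    _ = (∫⁻ y, k y ∂ν) ^ (p - 1) * ∫⁻ y, k y * f y ^ p ∂ν := by
        rw [ENNReal.mul_rpow_of_nonneg _ _ hp0.le, ENNReal.rpow_inv_rpow hp0.ne',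
          ← ENNReal.rpow_mul, sub_mul, inv_mul_cancel₀ hp0.ne', one_mul, mul_comm]

theorem lintegral_lintegral_mul_le_of_lintegral_le [SFinite μ] [SFinite ν] {K : X → Y → ℝ≥0∞}
    (hK : Measurable (Function.uncurry K)) {A : ℝ≥0∞} (hcol : ∀ᵐ y ∂ν, ∫⁻ x, K x y ∂μ ≤ A)
    {f : Y → ℝ≥0∞} (hf : AEMeasurable f ν) :
    ∫⁻ x, ∫⁻ y, K x y * f y ∂ν ∂μ ≤ A * ∫⁻ y, f y ∂ν := by
  have hKcol (y : Y) : Measurable fun x => K x y := hK.comp measurable_prodMk_right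
  calc ∫⁻ x, ∫⁻ y, K x y * f y ∂ν ∂μ
      = ∫⁻ y, ∫⁻ x, K x y * f y ∂μ ∂ν :=
        lintegral_lintegral_swap (hK.aemeasurable.mul hf.comp_snd)
    _ = ∫⁻ y, (∫⁻ x, K x y ∂μ) * f y ∂ν :=
        lintegral_congr fun y => lintegral_mul_const _ (hKcol y)
    _ ≤ ∫⁻ y, A * f y ∂ν := lintegral_mono_ae (hcol.mono fun y hy => by gcongr)
    _ = A * ∫⁻ y, f y ∂ν := lintegral_const_mul'' _ hf

theorem eLpNorm_top_lintegral_mul_le {K : X → Y → ℝ≥0∞}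
    (hK : ∀ x, Measurable (K x)) {A : ℝ≥0∞} (hrow : ∀ᵐ x ∂μ, ∫⁻ y, K x y ∂ν ≤ A)
    (f : Y → ℝ≥0∞) :
    eLpNorm (fun x => ∫⁻ y, K x y * f y ∂ν) ∞ μ ≤ A * eLpNorm f ∞ ν := by
  rw [eLpNorm_exponent_top, eLpNorm_exponent_top]
  refine eLpNormEssSup_le_of_ae_enorm_bound (hrow.mono fun x hx => ?_)
  calc ∫⁻ y, K x y * f y ∂ν
      ≤ ∫⁻ y, K x y * eLpNormEssSup f ν ∂ν :=
        lintegral_mono_ae ((enorm_ae_le_eLpNormEssSup f ν).mono fun y hy => by gcongr; exact hy)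
    _ = (∫⁻ y, K x y ∂ν) * eLpNormEssSup f ν := lintegral_mul_const _ (hK x)
    _ ≤ A * eLpNormEssSup f ν := by gcongr

theorem eLpNorm_lintegral_mul_le [SFinite μ] [SFinite ν] {K : X → Y → ℝ≥0∞}
    (hK : Measurable (Function.uncurry K)) {A : ℝ≥0∞}
    (hrow : ∀ᵐ x ∂μ, ∫⁻ y, K x y ∂ν ≤ A) (hcol : ∀ᵐ y ∂ν, ∫⁻ x, K x y ∂μ ≤ A)
    {f : Y → ℝ≥0∞} (hf : AEMeasurable f ν) {p : ℝ≥0∞} (hp : 1 ≤ p) :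
    eLpNorm (fun x => ∫⁻ y, K x y * f y ∂ν) p μ ≤ A * eLpNorm f p ν := by
  have hKrow (x : X) : Measurable (K x) := hK.comp measurable_prodMk_left
  rcases eq_or_ne p ∞ with rfl | hp_top
  · exact eLpNorm_top_lintegral_mul_le hKrow hrow f
  have hp0 : p ≠ 0 := (zero_lt_one.trans_le hp).ne'
  have hp1 : 1 ≤ p.toReal := by
    rwa [← ENNReal.toReal_one, ENNReal.toReal_le_toReal ENNReal.one_ne_top hp_top]
  have hp_pos : 0 < p.toReal := zero_lt_one.trans_le hp1
  have powers : ∫⁻ x, (∫⁻ y, K x y * f y ∂ν) ^ p.toReal ∂μ ≤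
      A ^ p.toReal * ∫⁻ y, f y ^ p.toReal ∂ν :=
    calc ∫⁻ x, (∫⁻ y, K x y * f y ∂ν) ^ p.toReal ∂μ
        ≤ ∫⁻ x, A ^ (p.toReal - 1) * ∫⁻ y, K x y * f y ^ p.toReal ∂ν ∂μ := by
          refine lintegral_mono_ae (hrow.mono fun x hx => ?_)
          refine (lintegral_mul_rpow_le_rpow_mul_lintegral_mul_rpow
            (hKrow x).aemeasurable hf hp1).trans ?_
          gcongr
      _ = A ^ (p.toReal - 1) * ∫⁻ x, ∫⁻ y, K x y * f y ^ p.toReal ∂ν ∂μ :=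
          lintegral_const_mul'' _
            (hK.aemeasurable.mul (hf.pow_const _).comp_snd).lintegral_prod_right'
      _ ≤ A ^ (p.toReal - 1) * (A * ∫⁻ y, f y ^ p.toReal ∂ν) := by
          gcongr
          exact lintegral_lintegral_mul_le_of_lintegral_le hK hcol (hf.pow_const _)
      _ = A ^ p.toReal * ∫⁻ y, f y ^ p.toReal ∂ν := by
          rw [← mul_assoc]
          nth_rw 2 [← ENNReal.rpow_one A]
          rw [← ENNReal.rpow_add_of_nonneg _ _ (sub_nonneg.2 hp1) zero_le_one, sub_add_cancel]
  rw [eLpNorm_eq_lintegral_rpow_enorm_toReal hp0 hp_top,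
    eLpNorm_eq_lintegral_rpow_enorm_toReal hp0 hp_top]
  simp only [enorm_eq_self, one_div]
  rw [ENNReal.rpow_inv_le_iff hp_pos, ENNReal.mul_rpow_of_nonneg _ _ hp_pos.le,
    ENNReal.rpow_inv_rpow hp_pos.ne']
  exact powers

end IntegralEstimates

section Torus

variable {d : ℕ}

theorem norm_le_euclNorm (v : Fin d → ℝ) : ‖v‖ ≤ euclNorm v := by
  refine (pi_norm_le_iff_of_nonneg (Real.sqrt_nonneg _)).2 fun i => ?_
  rw [Real.norm_eq_abs]
  exact Real.abs_le_sqrt (Finset.single_le_sum (fun j _ => sq_nonneg (v j)) (Finset.mem_univ i))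

theorem latVec_add (k l : Fin d → ℤ) : latVec (k + l) = latVec k + latVec l :=
  funext fun i => Int.cast_add (k i) (l i)

theorem latVec_neg (k : Fin d → ℤ) : latVec (-k) = -latVec k :=
  funext fun i => Int.cast_neg (k i)

/-- The closed neighbourhood of the lattice `ℤ^d` of radius `s`, in the sup norm of `ℝ^d`. Two
points of the torus are within sup distance `s` when the difference of their representatives lies
in it; the sup distance, which is smaller than the flat one, makes its balls products. -/
def latticeNhd (d : ℕ) (s : ℝ) : Set (Fin d → ℝ) :=
  {v | ∃ k : Fin d → ℤ, ‖v + latVec k‖ ≤ s}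

theorem measurableSet_latticeNhd (s : ℝ) : MeasurableSet (latticeNhd d s) := by
  simp only [latticeNhd, ofPred_exists]
  exact .iUnion fun k => measurableSet_le (by fun_prop) measurable_const

theorem neg_mem_latticeNhd {s : ℝ} {v : Fin d → ℝ} (hv : v ∈ latticeNhd d s) :
    -v ∈ latticeNhd d s := by
  obtain ⟨k, hk⟩ := hv
  exact ⟨-k, by rwa [latVec_neg, ← neg_add, norm_neg]⟩

theorem neg_mem_latticeNhd_iff {s : ℝ} {v : Fin d → ℝ} :
    -v ∈ latticeNhd d s ↔ v ∈ latticeNhd d s :=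
  ⟨fun hv => neg_neg v ▸ neg_mem_latticeNhd hv, neg_mem_latticeNhd⟩

theorem add_mem_latticeNhd {s t : ℝ} {v w : Fin d → ℝ} (hv : v ∈ latticeNhd d s)
    (hw : w ∈ latticeNhd d t) : v + w ∈ latticeNhd d (s + t) := by
  obtain ⟨k, hk⟩ := hv
  obtain ⟨l, hl⟩ := hw
  exact ⟨k + l, by rw [latVec_add, add_add_add_comm]; exact norm_add_le_of_le hk hl⟩

theorem tdist_nonneg (x y : Fin d → ℝ) : 0 ≤ tdist x y :=
  Real.iInf_nonneg fun _ => Real.sqrt_nonneg _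

theorem tdist_le_sqrt (x y : Fin d → ℝ) : tdist x y ≤ √d := by
  have hbdd : BddBelow (range fun k : Fin d → ℤ => euclNorm (x - y + latVec k)) :=
    ⟨0, forall_mem_range.2 fun _ => Real.sqrt_nonneg _⟩
  refine (ciInf_le hbdd fun i => -⌊x i - y i⌋).trans (Real.sqrt_le_sqrt ?_)
  calc ∑ i, (x - y + latVec fun i => -⌊x i - y i⌋) i ^ 2
      = ∑ i, Int.fract (x i - y i) ^ 2 := by simp [latVec, Int.fract, sub_eq_add_neg]
    _ ≤ ∑ _i : Fin d, 1 := Finset.sum_le_sum fun i _ =>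
        pow_le_one₀ (Int.fract_nonneg _) (Int.fract_lt_one _).le
    _ = d := by simp

theorem measurable_tdist :
    Measurable fun z : (Fin d → ℝ) × (Fin d → ℝ) => tdist z.1 z.2 := by
  unfold tdist euclNorm
  simp only [Pi.add_apply, Pi.sub_apply]
  fun_prop

theorem sub_mem_latticeNhd_of_tdist_lt {x y : Fin d → ℝ} {s : ℝ} (hxy : tdist x y < s) :
    x - y ∈ latticeNhd d s := by
  obtain ⟨k, hk⟩ := exists_lt_of_ciInf_lt hxy
  exact ⟨k, (norm_le_euclNorm _).trans hk.le⟩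

instance isProbabilityMeasure_torusMeasure : IsProbabilityMeasure (torusMeasure d) where
  measure_univ := by simp [torusMeasure, Tcube, Real.volume_pi_Ico]

open scoped Pointwise in
theorem torusMeasure_iUnion_translates_le (A : Set (Fin d → ℝ)) :
    torusMeasure d (⋃ k : Fin d → ℤ, {y | y + latVec k ∈ A}) ≤ volume A := by
  let L := (Submodule.span ℤ (range (Pi.basisFun ℝ (Fin d)))).toAddSubgroup
  have : Countable L :=
    inferInstanceAs (Countable (Submodule.span ℤ (range (Pi.basisFun ℝ (Fin d)))))
  have hTcube : MeasurableSet (Tcube d) := .univ_pi fun _ => measurableSet_Ico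
  have hdomain : IsAddFundamentalDomain L (Tcube d) := by
    simpa only [Tcube, ← ZSpan.fundamentalDomain_pi_basisFun] using
      ZSpan.isAddFundamentalDomain' (Pi.basisFun ℝ (Fin d)) volume
  have hlattice (k : Fin d → ℤ) : latVec k ∈ L :=
    ((Pi.basisFun ℝ (Fin d)).mem_span_iff_repr_mem ℤ _).2 fun i => ⟨k i, rfl⟩
  have htranslates : (⋃ k : Fin d → ℤ, {y | y + latVec k ∈ A}) ∩ Tcube d ⊆
      ⋃ g : L, (g +ᵥ A) ∩ Tcube d := by
    rintro y ⟨hy, hyT⟩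
    obtain ⟨k, hk⟩ := mem_iUnion.1 hy
    refine mem_iUnion.2 ⟨-⟨latVec k, hlattice k⟩, mem_vadd_set_iff_neg_vadd_mem.2 ?_, hyT⟩
    rw [neg_neg, AddSubgroup.vadd_def, vadd_eq_add, add_comm]
    exact hk
  calc torusMeasure d (⋃ k : Fin d → ℤ, {y | y + latVec k ∈ A})
      = volume ((⋃ k : Fin d → ℤ, {y | y + latVec k ∈ A}) ∩ Tcube d) :=
        Measure.restrict_apply' hTcube
    _ ≤ ∑' g : L, volume ((g +ᵥ A) ∩ Tcube d) :=
        (measure_mono htranslates).trans (measure_iUnion_le _)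
    _ = volume A := (hdomain.measure_eq_tsum A).symm

theorem torusMeasure_sub_mem_latticeNhd_le {s : ℝ} (hs : 0 ≤ s) (x : Fin d → ℝ) :
    torusMeasure d {y | y - x ∈ latticeNhd d s} ≤ ENNReal.ofReal ((2 * s) ^ d) :=
  calc torusMeasure d {y | y - x ∈ latticeNhd d s}
      ≤ torusMeasure d (⋃ k : Fin d → ℤ, {y | y + latVec k ∈ Metric.closedBall x s}) := by
        refine measure_mono fun y ⟨k, hk⟩ => mem_iUnion.2 ⟨k, ?_⟩
        rwa [mem_ofPred_eq, mem_closedBall_iff_norm, add_sub_right_comm]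
    _ ≤ volume (Metric.closedBall x s) := torusMeasure_iUnion_translates_le _
    _ = ENNReal.ofReal ((2 * s) ^ d) := by
        rw [Real.volume_pi_closedBall _ hs, Fintype.card_fin]

end Torus

section Periodisation

variable {d : ℕ}

theorem exists_finset_latVec_card_le {r : ℝ} (hr : 0 ≤ r) (v : Fin d → ℝ) :
    ∃ S : Finset (Fin d → ℤ),
      (∀ k, ‖v + latVec k‖ ≤ r → k ∈ S) ∧ (S.card : ℝ) ≤ (2 * r + 1) ^ d := by
  refine ⟨Fintype.piFinset fun i => Finset.Icc ⌈-r - v i⌉ ⌊r - v i⌋, fun k hk => ?_, ?_⟩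
  · refine Fintype.mem_piFinset.2 fun i => Finset.mem_Icc.2 ?_
    obtain ⟨hlower, hupper⟩ := abs_le.1 ((norm_le_pi_norm _ i).trans hk)
    simp only [Pi.add_apply, latVec] at hlower hupper
    exact ⟨Int.ceil_le.2 (by linarith), Int.le_floor.2 (by linarith)⟩
  · have hcard (t : ℝ) : ((⌊r - t⌋ + 1 - ⌈-r - t⌉).toNat : ℝ) ≤ 2 * r + 1 := by
      rw [← Int.cast_natCast, Int.toNat_eq_max, Int.cast_max]
      push_cast
      exact max_le (by linarith [Int.floor_le (r - t), Int.le_ceil (-r - t)]) (by linarith)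
    rw [Fintype.card_piFinset, Nat.cast_prod]
    simp only [Int.card_Icc]
    calc ∏ i, ((⌊r - v i⌋ + 1 - ⌈-r - v i⌉).toNat : ℝ)
        ≤ ∏ _i : Fin d, (2 * r + 1) :=
          Finset.prod_le_prod (fun _ _ => Nat.cast_nonneg _) fun i _ => hcard (v i)
      _ = (2 * r + 1) ^ d := by simp

section

variable {g : (Fin d → ℝ) → ℝ} {r : ℝ}

theorem periodised_eq_zero (hg : ∀ x, r < ‖x‖ → g x = 0) {v : Fin d → ℝ}
    (hv : v ∉ latticeNhd d r) : periodised g v = 0 := by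
  simp only [latticeNhd, mem_ofPred_eq, not_exists, not_le] at hv
  simp only [periodised, hg _ (hv _), tsum_zero]

theorem abs_periodised_le (hg : ∀ x, r < ‖x‖ → g x = 0) (hr : 0 ≤ r) {b : ℝ}
    (hb : ∀ x, |g x| ≤ b) (v : Fin d → ℝ) : |periodised g v| ≤ (2 * r + 1) ^ d * b := by
  obtain ⟨S, hS, hcard⟩ := exists_finset_latVec_card_le hr v
  have hb0 : 0 ≤ b := (abs_nonneg _).trans (hb 0)
  have hzero : ∀ k ∉ S, g (v + latVec k) = 0 := fun k hk =>
    hg _ (not_le.1 fun hle => hk (hS k hle))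
  calc |periodised g v| = |∑ k ∈ S, g (v + latVec k)| := by rw [periodised, tsum_eq_sum hzero]
    _ ≤ ∑ k ∈ S, |g (v + latVec k)| := Finset.abs_sum_le_sum_abs _ _
    _ ≤ S.card • b := Finset.sum_le_card_nsmul _ _ _ fun k _ => hb _
    _ ≤ (2 * r + 1) ^ d * b := by rw [nsmul_eq_mul]; gcongr

end

variable {χ : (Fin d → ℝ) → ℝ} {M r : ℝ}

theorem scaledMollifier_eq_zero (hχ : ∀ x, 1 < ‖x‖ → χ x = 0) (hr : 0 < r) {x : Fin d → ℝ}
    (hx : r < ‖x‖) : scaledMollifier χ r x = 0 := by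
  have hscale : (fun i => x i / r) = r⁻¹ • x := funext fun i => div_eq_inv_mul _ _
  rw [scaledMollifier, hscale, hχ, mul_zero]
  rwa [norm_smul, norm_inv, Real.norm_of_nonneg hr.le, ← div_eq_inv_mul, one_lt_div hr]

theorem abs_scaledMollifier_le (hM : ∀ x, |χ x| ≤ M) (hr : 0 < r) (x : Fin d → ℝ) :
    |scaledMollifier χ r x| ≤ (r ^ d)⁻¹ * M := by
  rw [scaledMollifier, abs_mul, abs_of_pos (by positivity)]
  gcongr
  exact hM _

theorem enorm_periodised_scaledMollifier_le (hχ : ∀ x, 1 < ‖x‖ → χ x = 0)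
    (hM : ∀ x, |χ x| ≤ M) (hr : 0 < r) (v : Fin d → ℝ) :
    ‖periodised (scaledMollifier χ r) v‖ₑ ≤ ENNReal.ofReal (M * (2 + r⁻¹) ^ d) := by
  rw [Real.enorm_eq_ofReal_abs]
  refine ENNReal.ofReal_le_ofReal ?_
  calc |periodised (scaledMollifier χ r) v| ≤ (2 * r + 1) ^ d * ((r ^ d)⁻¹ * M) :=
        abs_periodised_le (fun _ => scaledMollifier_eq_zero hχ hr) hr.le
          (abs_scaledMollifier_le hM hr) v
    _ = M * (2 + r⁻¹) ^ d := by
        rw [show 2 + r⁻¹ = (2 * r + 1) / r by field_simp, div_pow]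
        ring

end Periodisation

section Couplings

theorem isCoupling_prod {X : Type*} [MeasurableSpace X] (μ ν : Measure X)
    [IsProbabilityMeasure μ] [IsProbabilityMeasure ν] : IsCoupling (μ.prod ν) μ ν :=
  ⟨Measure.fst_prod, Measure.snd_prod⟩

variable {d : ℕ} {q r : ℝ} {p : ℝ≥0∞} {μ ν : Measure (Fin d → ℝ)} {h : (Fin d → ℝ) → ℝ}
  {cpl : Measure ((Fin d → ℝ) × (Fin d → ℝ))}

theorem wassPow_nonneg : 0 ≤ WassPow q μ ν := by
  refine Real.sInf_nonneg ?_
  rintro _ ⟨cpl, -, -, rfl⟩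
  exact integral_nonneg fun z => Real.rpow_nonneg (tdist_nonneg _ _) _

theorem le_apply_wassPow_of_forall_coupling [IsProbabilityMeasure μ] [IsProbabilityMeasure ν]
    {a : ℝ≥0∞} {Φ : ℝ → ℝ≥0∞} (hΦ : Continuous Φ)
    (ha : ∀ (cpl : Measure ((Fin d → ℝ) × (Fin d → ℝ))) [IsProbabilityMeasure cpl],
      IsCoupling cpl μ ν → a ≤ Φ (∫ z, tdist z.1 z.2 ^ q ∂cpl)) :
    a ≤ Φ (WassPow q μ ν) := by
  refine closure_minimal ?_ (isClosed_le continuous_const hΦ) (csInf_mem_closure ?_ ⟨0, ?_⟩)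
  · rintro _ ⟨cpl, _, hcpl, rfl⟩
    exact ha cpl hcpl
  · exact ⟨_, μ.prod ν, inferInstance, isCoupling_prod μ ν, rfl⟩
  · rintro _ ⟨cpl, -, -, rfl⟩
    exact integral_nonneg fun z => Real.rpow_nonneg (tdist_nonneg _ _) _

theorem measure_le_tdist_le_rpow_mul_integral [IsFiniteMeasure cpl] (hr : 0 < r) (hq : 0 ≤ q) :
    cpl {z | r ≤ tdist z.1 z.2} ≤
      ENNReal.ofReal (r ^ (-q) * ∫ z, tdist z.1 z.2 ^ q ∂cpl) := by
  have hnonneg (z : (Fin d → ℝ) × (Fin d → ℝ)) : 0 ≤ tdist z.1 z.2 ^ q :=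
    Real.rpow_nonneg (tdist_nonneg _ _) _
  have hint : Integrable (fun z => tdist z.1 z.2 ^ q) cpl :=
    .of_bound (measurable_tdist.pow_const q).aestronglyMeasurable (√d ^ q) <| .of_forall fun z => by
      rw [Real.norm_of_nonneg (hnonneg z)]
      exact Real.rpow_le_rpow (tdist_nonneg _ _) (tdist_le_sqrt _ _) hq
  have markov : r ^ q * cpl.real {z | r ^ q ≤ tdist z.1 z.2 ^ q} ≤ ∫ z, tdist z.1 z.2 ^ q ∂cpl :=
    mul_meas_ge_le_integral_of_nonneg (.of_forall hnonneg) hint (r ^ q)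
  calc cpl {z | r ≤ tdist z.1 z.2}
      ≤ cpl {z | r ^ q ≤ tdist z.1 z.2 ^ q} :=
        measure_mono fun _ hz => Real.rpow_le_rpow hr.le hz hq
    _ = ENNReal.ofReal (cpl.real {z | r ^ q ≤ tdist z.1 z.2 ^ q}) :=
        (ofReal_measureReal (measure_ne_top _ _)).symm
    _ ≤ ENNReal.ofReal (r ^ (-q) * ∫ z, tdist z.1 z.2 ^ q ∂cpl) := by
        refine ENNReal.ofReal_le_ofReal ?_
        rwa [Real.rpow_neg hr.le, ← div_eq_inv_mul, le_div_iff₀' (by positivity)]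

theorem measure_le_tdist_le_pow_mul_rpow_mul_integral [IsFiniteMeasure cpl] (hr : 0 < r)
    (hq : 0 ≤ q) :
    cpl {z | r ≤ tdist z.1 z.2} ≤ ENNReal.ofReal (r ^ d) *
      ENNReal.ofReal (r ^ (-(q + (d : ℝ))) * ∫ z, tdist z.1 z.2 ^ q ∂cpl) := by
  have hpow : r ^ d * r ^ (-(q + (d : ℝ))) = r ^ (-q) := by
    rw [← Real.rpow_natCast, ← Real.rpow_add hr, neg_add_rev, add_neg_cancel_left]
  rw [← ENNReal.ofReal_mul (by positivity), ← mul_assoc, hpow]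
  exact measure_le_tdist_le_rpow_mul_integral hr hq

theorem lintegral_le_of_isCoupling {f : (Fin d → ℝ) → ℝ≥0∞} {b : ℝ≥0∞} (hfb : ∀ v, f v ≤ b)
    (hf : ∀ v ∉ latticeNhd d r, f v = 0) (hcpl : IsCoupling cpl μ ν) (x : Fin d → ℝ) :
    ∫⁻ y, f (x - y) ∂ν ≤
      b * (μ {y | x - y ∈ latticeNhd d (2 * r)} + cpl {z | r ≤ tdist z.1 z.2}) := by
  let near : Set (Fin d → ℝ) := {y | x - y ∈ latticeNhd d (2 * r)}
  let far : Set ((Fin d → ℝ) × (Fin d → ℝ)) := {z | r ≤ tdist z.1 z.2}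
  have hnear : MeasurableSet near := (measurableSet_latticeNhd _).preimage (by fun_prop)
  have hsupport (z : (Fin d → ℝ) × (Fin d → ℝ)) (hz : f (x - z.2) ≠ 0) :
      z ∈ Prod.fst ⁻¹' near ∪ far := by
    refine or_iff_not_imp_right.2 fun hfar => ?_
    have hxz : x - z.2 ∈ latticeNhd d r := not_imp_comm.1 (hf _) hz
    have hzz : -(z.1 - z.2) ∈ latticeNhd d r :=
      neg_mem_latticeNhd (sub_mem_latticeNhd_of_tdist_lt (not_le.1 hfar))
    simpa [near, two_mul] using add_mem_latticeNhd hxz hzz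
  calc ∫⁻ y, f (x - y) ∂ν
      ≤ ∫⁻ z, f (x - z.2) ∂cpl := by
        rw [← hcpl.2]
        exact lintegral_map_le _ _
    _ ≤ ∫⁻ z, (Prod.fst ⁻¹' near ∪ far).indicator (fun _ => b) z ∂cpl := by
        refine lintegral_mono fun z => ?_
        by_cases hz : f (x - z.2) = 0
        · simp [hz]
        · rw [indicator_of_mem (hsupport z hz)]
          exact hfb _
    _ ≤ b * cpl (Prod.fst ⁻¹' near ∪ far) := lintegral_indicator_const_le _ _
    _ ≤ b * (cpl (Prod.fst ⁻¹' near) + cpl far) := by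
        gcongr
        exact measure_union_le _ _
    _ = b * (μ near + cpl far) := by
        rw [← hcpl.1, Measure.map_apply measurable_fst hnear]

theorem isProbabilityMeasure_densMeasure (hh0 : 0 ≤ h) (hh1 : ∫ x, h x ∂torusMeasure d = 1) :
    IsProbabilityMeasure (densMeasure h) where
  measure_univ := by
    have hint : Integrable h (torusMeasure d) := .of_integral_ne_zero (by simp [hh1])
    rw [densMeasure, withDensity_apply _ .univ, Measure.restrict_univ,
      ← ofReal_integral_eq_lintegral_ofReal hint (.of_forall hh0), hh1, ENNReal.ofReal_one]

instance sFinite_densMeasure : SFinite (densMeasure h) := by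
  unfold densMeasure
  infer_instance

theorem densMeasure_sub_mem_eq_lintegral (h : (Fin d → ℝ) → ℝ) {A : Set (Fin d → ℝ)}
    (hA : MeasurableSet A) (x : Fin d → ℝ) :
    densMeasure h {y | x - y ∈ A} =
      ∫⁻ y, A.indicator 1 (x - y) * ENNReal.ofReal (h y) ∂torusMeasure d := by
  have hpre : MeasurableSet {y | x - y ∈ A} := hA.preimage (by fun_prop)
  rw [densMeasure, withDensity_apply _ hpre, ← lintegral_indicator hpre]
  refine lintegral_congr fun y => ?_
  by_cases hy : x - y ∈ A <;> simp [hy]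

theorem eLpNorm_densMeasure_latticeNhd_le (hh : AEMeasurable h (torusMeasure d)) {s : ℝ}
    (hs : 0 ≤ s) (hp : 1 ≤ p) :
    eLpNorm (fun x => densMeasure h {y | x - y ∈ latticeNhd d s}) p (torusMeasure d) ≤
      ENNReal.ofReal ((2 * s) ^ d) * eLpNorm h p (torusMeasure d) := by
  have hN := measurableSet_latticeNhd (d := d) s
  let K (x y : Fin d → ℝ) : ℝ≥0∞ := (latticeNhd d s).indicator 1 (x - y)
  have hK : Measurable (Function.uncurry K) :=
    (measurable_one.indicator hN).comp (measurable_fst.sub measurable_snd)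
  have hcol (y : Fin d → ℝ) :
      ∫⁻ x, K x y ∂torusMeasure d ≤ ENNReal.ofReal ((2 * s) ^ d) := by
    have hpre : MeasurableSet {x | x - y ∈ latticeNhd d s} := hN.preimage (by fun_prop)
    exact (lintegral_indicator_one hpre).trans_le (torusMeasure_sub_mem_latticeNhd_le hs y)
  have hsymm (x y : Fin d → ℝ) : K x y = K y x := by
    have hmem : x - y ∈ latticeNhd d s ↔ y - x ∈ latticeNhd d s := by
      rw [← neg_sub, neg_mem_latticeNhd_iff]
    exact indicator_const_eq_indicator_const hmem
  have hrow (x : Fin d → ℝ) :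
      ∫⁻ y, K x y ∂torusMeasure d ≤ ENNReal.ofReal ((2 * s) ^ d) := by
    simpa only [hsymm x] using hcol x
  simp only [densMeasure_sub_mem_eq_lintegral h hN]
  refine (eLpNorm_lintegral_mul_le hK (.of_forall hrow) (.of_forall hcol)
    hh.ennreal_ofReal hp).trans ?_
  gcongr 1
  refine eLpNorm_mono_enorm fun y => ?_
  rw [enorm_eq_self, Real.enorm_eq_ofReal_abs]
  exact ENNReal.ofReal_le_ofReal (le_abs_self _)

theorem eLpNorm_lintegral_le_of_isCoupling {f : (Fin d → ℝ) → ℝ≥0∞} {b : ℝ≥0∞}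
    (hfb : ∀ v, f v ≤ b) (hf : ∀ v ∉ latticeNhd d r, f v = 0)
    (hh : AEMeasurable h (torusMeasure d)) (hcpl : IsCoupling cpl (densMeasure h) ν)
    (hr : 0 ≤ r) (hp : 1 ≤ p) :
    eLpNorm (fun x => ∫⁻ y, f (x - y) ∂ν) p (torusMeasure d) ≤
      b * (ENNReal.ofReal ((4 * r) ^ d) * eLpNorm h p (torusMeasure d) +
        cpl {z | r ≤ tdist z.1 z.2}) := by
  let near (x : Fin d → ℝ) : ℝ≥0∞ := densMeasure h {y | x - y ∈ latticeNhd d (2 * r)}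
  have hnear : Measurable near := measurable_measure_prodMk_left <|
    (measurableSet_latticeNhd (2 * r)).preimage (measurable_fst.sub measurable_snd)
  calc eLpNorm (fun x => ∫⁻ y, f (x - y) ∂ν) p (torusMeasure d)
      ≤ b * eLpNorm (near + fun _ => cpl {z | r ≤ tdist z.1 z.2}) p (torusMeasure d) :=
        eLpNorm_le_mul_eLpNorm_of_ae_le_mul'' p (hnear.add_const _).aestronglyMeasurable <|
          .of_forall fun x => lintegral_le_of_isCoupling hfb hf hcpl x
    _ ≤ b * (eLpNorm near p (torusMeasure d) +
          eLpNorm (fun _ => cpl {z | r ≤ tdist z.1 z.2}) p (torusMeasure d)) := by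
        gcongr
        exact eLpNorm_add_le hnear.aestronglyMeasurable aestronglyMeasurable_const hp
    _ ≤ b * (ENNReal.ofReal ((2 * (2 * r)) ^ d) * eLpNorm h p (torusMeasure d) +
          cpl {z | r ≤ tdist z.1 z.2}) := by
        gcongr
        · exact eLpNorm_densMeasure_latticeNhd_le hh (by positivity) hp
        · rw [eLpNorm_const _ (zero_lt_one.trans_le hp).ne' (IsProbabilityMeasure.ne_zero _)]
          simp
    _ = b * (ENNReal.ofReal ((4 * r) ^ d) * eLpNorm h p (torusMeasure d) +
          cpl {z | r ≤ tdist z.1 z.2}) := by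
        rw [← mul_assoc, show (2 : ℝ) * 2 = 4 by norm_num]

end Couplings

section MollifierEstimate

variable {d : ℕ} {χ h : (Fin d → ℝ) → ℝ} {M r q : ℝ} {p : ℝ≥0∞} {ν : Measure (Fin d → ℝ)}

theorem eLpNorm_mollified_le_of_one_le (hM : ∀ x, |χ x| ≤ M) (hχ : ∀ x, 1 < ‖x‖ → χ x = 0)
    [IsProbabilityMeasure ν] (hh1 : ∫ x, h x ∂torusMeasure d = 1) (hr : 1 ≤ r) (hp : 1 ≤ p) :
    eLpNorm (fun x => ∫⁻ y, ‖periodised (scaledMollifier χ r) (x - y)‖ₑ ∂ν) p (torusMeasure d) ≤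
      ENNReal.ofReal (12 ^ d * M) * eLpNorm h p (torusMeasure d) := by
  have hint : Integrable h (torusMeasure d) := .of_integral_ne_zero (by simp [hh1])
  have hM0 : 0 ≤ M := (abs_nonneg _).trans (hM 0)
  have hheight : M * (2 + r⁻¹) ^ d ≤ 12 ^ d * M := by
    rw [mul_comm]
    gcongr
    linarith [inv_le_one_of_one_le₀ hr]
  have hpoint (x : Fin d → ℝ) : ‖∫⁻ y, ‖periodised (scaledMollifier χ r) (x - y)‖ₑ ∂ν‖ₑ ≤
      ENNReal.ofReal (12 ^ d * M) := by
    refine (lintegral_mono fun y => (enorm_periodised_scaledMollifier_le hχ hM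
      (zero_lt_one.trans_le hr) (x - y)).trans (ENNReal.ofReal_le_ofReal hheight)).trans_eq ?_
    simp
  calc eLpNorm (fun x => ∫⁻ y, ‖periodised (scaledMollifier χ r) (x - y)‖ₑ ∂ν) p (torusMeasure d)
      ≤ ENNReal.ofReal (12 ^ d * M) • torusMeasure d univ ^ p.toReal⁻¹ :=
        eLpNorm_le_of_ae_enorm_bound (.of_forall hpoint)
    _ = ENNReal.ofReal (12 ^ d * M) := by rw [measure_univ, ENNReal.one_rpow, smul_eq_mul, mul_one]
    _ ≤ ENNReal.ofReal (12 ^ d * M) * eLpNorm h p (torusMeasure d) :=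
        le_mul_of_one_le_right' <| by simpa [hh1] using enorm_integral_le_eLpNorm hint.1 hp

theorem eLpNorm_mollified_le_of_isCoupling (hM : ∀ x, |χ x| ≤ M) (hχ : ∀ x, 1 < ‖x‖ → χ x = 0)
    (hh : AEMeasurable h (torusMeasure d)) {cpl : Measure ((Fin d → ℝ) × (Fin d → ℝ))}
    [IsFiniteMeasure cpl] (hcpl : IsCoupling cpl (densMeasure h) ν) (hr : 0 < r) (hr1 : r ≤ 1)
    (hp : 1 ≤ p) (hq : 0 ≤ q) :
    eLpNorm (fun x => ∫⁻ y, ‖periodised (scaledMollifier χ r) (x - y)‖ₑ ∂ν) p (torusMeasure d) ≤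
      ENNReal.ofReal (12 ^ d * M) * (eLpNorm h p (torusMeasure d) +
        ENNReal.ofReal (r ^ (-(q + (d : ℝ))) * ∫ z, tdist z.1 z.2 ^ q ∂cpl)) := by
  have hM0 : 0 ≤ M := (abs_nonneg _).trans (hM 0)
  let far := ENNReal.ofReal (r ^ (-(q + (d : ℝ))) * ∫ z, tdist z.1 z.2 ^ q ∂cpl)
  have hvanish (v : Fin d → ℝ) (hv : v ∉ latticeNhd d r) :
      ‖periodised (scaledMollifier χ r) v‖ₑ = 0 := by
    rw [periodised_eq_zero (fun _ => scaledMollifier_eq_zero hχ hr) hv, enorm_zero]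
  have hheight : M * (2 + r⁻¹) ^ d * (4 * r) ^ d ≤ 12 ^ d * M :=
    calc M * (2 + r⁻¹) ^ d * (4 * r) ^ d = (8 * r + 4) ^ d * M := by
          have hbase : (2 + r⁻¹) * (4 * r) = 8 * r + 4 := by field_simp; ring
          rw [mul_assoc, ← mul_pow, hbase, mul_comm]
      _ ≤ 12 ^ d * M := by gcongr; linarith
  have hfar : cpl {z | r ≤ tdist z.1 z.2} ≤ ENNReal.ofReal ((4 * r) ^ d) * far := by
    refine (measure_le_tdist_le_pow_mul_rpow_mul_integral hr hq).trans ?_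
    gcongr
    linarith
  calc eLpNorm (fun x => ∫⁻ y, ‖periodised (scaledMollifier χ r) (x - y)‖ₑ ∂ν) p (torusMeasure d)
      ≤ ENNReal.ofReal (M * (2 + r⁻¹) ^ d) * (ENNReal.ofReal ((4 * r) ^ d) *
          eLpNorm h p (torusMeasure d) + cpl {z | r ≤ tdist z.1 z.2}) :=
        eLpNorm_lintegral_le_of_isCoupling
          (f := fun v => ‖periodised (scaledMollifier χ r) v‖ₑ)
          (enorm_periodised_scaledMollifier_le hχ hM hr) hvanish hh hcpl hr.le hp
    _ ≤ ENNReal.ofReal (M * (2 + r⁻¹) ^ d) * (ENNReal.ofReal ((4 * r) ^ d) *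
          eLpNorm h p (torusMeasure d) + ENNReal.ofReal ((4 * r) ^ d) * far) := by
        gcongr
    _ = ENNReal.ofReal (M * (2 + r⁻¹) ^ d * (4 * r) ^ d) *
          (eLpNorm h p (torusMeasure d) + far) := by
        rw [← mul_add, ← mul_assoc, ← ENNReal.ofReal_mul (by positivity)]
    _ ≤ ENNReal.ofReal (12 ^ d * M) * (eLpNorm h p (torusMeasure d) + far) := by
        gcongr

theorem exists_pos_forall_abs_le (hc : Continuous χ) (hχ : ∀ x, 1 < ‖x‖ → χ x = 0) :
    ∃ M, 0 < M ∧ ∀ x, |χ x| ≤ M := by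
  have hsupp : HasCompactSupport χ :=
    .of_support_subset_isCompact (isCompact_closedBall 0 1) fun x hx =>
      mem_closedBall_zero_iff.2 (not_lt.1 fun hlt => hx (hχ x hlt))
  obtain ⟨B, hB⟩ := hc.bounded_above_of_compact_support hsupp
  exact ⟨max B 1, by positivity, fun x => (hB x).trans (le_max_left _ _)⟩

theorem statement15_general (hM : ∀ x, |χ x| ≤ M) (hχ : ∀ x, 1 < ‖x‖ → χ x = 0)
    [IsProbabilityMeasure ν] (hh0 : 0 ≤ h) (hh1 : ∫ x, h x ∂torusMeasure d = 1) (hr : 0 < r)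
    (hp : 1 ≤ p) (hhp : MemLp h p (torusMeasure d)) (hq : 0 ≤ q) :
    eLpNorm (fun x => ∫⁻ y, ‖periodised (scaledMollifier χ r) (x - y)‖ₑ ∂ν) p (torusMeasure d) ≤
      ENNReal.ofReal (12 ^ d * M *
        (LpNorm p h + r ^ (-(q + (d : ℝ))) * WassPow q (densMeasure h) ν)) := by
  have hM0 : 0 ≤ M := (abs_nonneg _).trans (hM 0)
  have := isProbabilityMeasure_densMeasure hh0 hh1
  rw [LpNorm, ENNReal.ofReal_mul (by positivity), ENNReal.ofReal_add ENNReal.toReal_nonneg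
    (mul_nonneg (by positivity) wassPow_nonneg), ENNReal.ofReal_toReal hhp.eLpNorm_ne_top]
  rcases le_total r 1 with hr1 | hr1
  · refine le_apply_wassPow_of_forall_coupling (Φ := fun c => ENNReal.ofReal (12 ^ d * M) *
      (eLpNorm h p (torusMeasure d) + ENNReal.ofReal (r ^ (-(q + (d : ℝ))) * c))) ?_
      fun cpl _ hcpl =>
        eLpNorm_mollified_le_of_isCoupling hM hχ hhp.1.aemeasurable hcpl hr hr1 hp hq
    exact (ENNReal.continuous_const_mul ENNReal.ofReal_ne_top).comp <|
      continuous_const.add (ENNReal.continuous_ofReal.comp (continuous_const_mul _))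
  · exact (eLpNorm_mollified_le_of_one_le hM hχ hh1 hr1 hp).trans (by gcongr; exact le_self_add)

end MollifierEstimate

/-- `L^p` estimate on a mollified measure in terms of a reference
density: `‖χ_r ∗ ν‖_{L^p} ≤ C (‖h‖_{L^p} + r^{−(q+d)} W_q^q(h dx, ν))`. -/
theorem statement15 (d : ℕ) (χ : (Fin d → ℝ) → ℝ)
    (hχ_smooth : ContDiff ℝ (⊤ : ℕ∞) χ) (hχ_nonneg : ∀ x, 0 ≤ χ x)
    (hχ_supp : ∀ x, 1 < euclNorm x → χ x = 0)
    (hχ_int : (∫ x, χ x) = 1) :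
    ∃ C : ℝ, 0 < C ∧
      ∀ ν : Measure (Fin d → ℝ), IsTorusProb ν →
      ∀ h : (Fin d → ℝ) → ℝ,
        Measurable h → ZPeriodic h → (∀ x, 0 ≤ h x) →
        (∫ x, h x ∂(torusMeasure d)) = 1 → MemLp h ⊤ (torusMeasure d) →
      ∀ r : ℝ, 0 < r → ∀ p : ℝ≥0∞, 1 ≤ p → ∀ q : ℝ, 1 ≤ q →
        eLpNorm (fun x => ∫ y, periodised (scaledMollifier χ r) (x - y) ∂ν) p
            (torusMeasure d) ≤
          ENNReal.ofReal (C * (LpNorm p h +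
            r ^ (-(q + (d : ℝ))) * WassPow q (densMeasure h) ν)) := by
  have hχ (x : Fin d → ℝ) (hx : 1 < ‖x‖) : χ x = 0 := hχ_supp x (hx.trans_le (norm_le_euclNorm x))
  obtain ⟨M, hM0, hM⟩ := exists_pos_forall_abs_le hχ_smooth.continuous hχ
  refine ⟨12 ^ d * M, by positivity, fun ν hν h _ _ hh0 hh1 hh r hr p hp q hq => ?_⟩
  have := hν.1
  exact (eLpNorm_mono_enorm fun x => enorm_integral_le_lintegral_enorm _).trans
    (statement15_general hM hχ hh0 hh1 hr hp (hh.mono_exponent le_top) (by linarith))
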